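/- Let G be a graph with n vertices and let k be an integer with 0 ≤ k ≤ n. Then T(G) can be transformed by a sequence of subtree raising operations pruning exactly k inner nodes in total into a decision tree with zero errors on E(G) if and only if G has an independent set of size k; the same equivalence holds with 'pruning at least k inner nodes' in place of 'pruning exactly k inner nodes'. Moreover, for every S ⊆ V(G), the tree obtained from T(G) by applying, at each cut 'v ≤ 0' with v ∈ S, the raising operation keeping the child that continues the path has zero errors on E(G) if and only if S is an independent set of G. -/

import Mathlib

/-- The two class labels. -/
inductive Label where
  | blue
  | red
deriving DecidableEq

/-- A decision tree over examples `ι → ℝ` with classes `{blue, red}`: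
every inner node carries a feature and a threshold, every leaf a class label.
An example goes to the left child if its value in the node's feature is at most
the threshold, and to the right child otherwise. -/
inductive DTree (ι : Type) where
  | leaf (c : Label)
  | node (feat : ι) (thr : ℝ) (left right : DTree ι)

namespace DTree

variable {ι : Type}

/-- The class that a decision tree assigns to an example. -/
noncomputable def classify : DTree ι → (ι → ℝ) → Label
  | .leaf c, _ => c
  | .node f t l r, e => if e f ≤ t then l.classify e else r.classify e

/-- The routing path of an example (`false` = left child, `true` = right child);
it is the position of the leaf of the example. -/
noncomputable def route : DTree ι → (ι → ℝ) → List Bool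
  | .leaf _, _ => []
  | .node f t l r, e => if e f ≤ t then false :: l.route e else true :: r.route e

/-- The subtree rooted at a position (`none` if the position is not a node). -/
def subtreeAt : DTree ι → List Bool → Option (DTree ι)
  | T, [] => some T
  | .leaf _, _ :: _ => none
  | .node _ _ l r, b :: p => (if b then r else l).subtreeAt p

/-- Replace the subtree at a given position by another tree. -/
def replaceAt : DTree ι → List Bool → DTree ι → DTree ι
  | _, [], T' => T'
  | .leaf c, _ :: _, _ => .leaf c
  | .node f t l r, b :: p, T' =>
      if b then .node f t l (r.replaceAt p T') else .node f t (l.replaceAt p T') r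

/-- The number of inner nodes of a decision tree. -/
def innerCount : DTree ι → ℕ
  | .leaf _ => 0
  | .node _ _ l r => 1 + l.innerCount + r.innerCount

/-- The position `p` is an inner node of `T`. -/
def IsInnerPos (T : DTree ι) (p : List Bool) : Prop :=
  ∃ f t l r, T.subtreeAt p = some (.node f t l r)

/-- The position `p` is a node of `T`. -/
def IsNodePos (T : DTree ι) (p : List Bool) : Prop :=
  (T.subtreeAt p).isSome

/-- The feature and threshold of the inner node at position `p`. -/
def cutAt (T : DTree ι) (p : List Bool) : Option (ι × ℝ) :=
  match T.subtreeAt p with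
  | some (.node f t _ _) => some (f, t)
  | _ => none

/-- The subtree raising operation at position `q` keeping the child in direction `b`:
the subtree rooted at `q` is replaced by the subtree rooted at its `b`-child; it prunes
the node at `q` together with all inner nodes of the subtree rooted at the other child. -/
def raiseAt (T : DTree ι) (q : List Bool) (b : Bool) : DTree ι :=
  match T.subtreeAt q with
  | some (.node _ _ l r) => T.replaceAt q (if b then r else l)
  | _ => T

end DTree

/-- `E[T,p]`: the examples of `E` whose routing through `T` passes the position `p`. -/
noncomputable def reach {ι : Type} (E : Finset (ι → ℝ)) (T : DTree ι) (p : List Bool) :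
    Finset (ι → ℝ) :=
  E.filter fun e => p <+: T.route e

/-- The number of errors of `T` on the training set `(E, lab)`. -/
noncomputable def errCount {ι : Type} (T : DTree ι) (E : Finset (ι → ℝ))
    (lab : (ι → ℝ) → Label) : ℕ :=
  (E.filter fun e => T.classify e ≠ lab e).card

/-- A most frequent label of the labeled set `(E, lab)` (blue in case of a tie). -/
def majorityLabel {ι : Type} (E : Finset (ι → ℝ)) (lab : (ι → ℝ) → Label) : Label :=
  if (E.filter fun e => lab e = Label.red).card ≤ (E.filter fun e => lab e = Label.blue).card
  then Label.blue else Label.red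

/-- One subtree replacement operation: some inner node of `T` is replaced by a leaf
labeled with a most frequent label of the examples reaching it. -/
def ReplStep {ι : Type} (E : Finset (ι → ℝ)) (lab : (ι → ℝ) → Label)
    (T T' : DTree ι) : Prop :=
  ∃ p, T.IsInnerPos p ∧
    T' = T.replaceAt p (.leaf (majorityLabel (reach E T p) lab))

/-- `T` is a reasonable decision tree for `(E, lab)`: every node is reached by some
example and every leaf carries a most frequent label of the examples reaching it. -/
def Reasonable {ι : Type} (E : Finset (ι → ℝ)) (lab : (ι → ℝ) → Label)
    (T : DTree ι) : Prop :=
  (∀ p, T.IsNodePos p → (reach E T p).Nonempty) ∧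
  (∀ p c, T.subtreeAt p = some (.leaf c) → ∀ c' : Label,
    ((reach E T p).filter fun e => lab e = c').card ≤
      ((reach E T p).filter fun e => lab e = c).card)

/-- Apply a sequence of raising operations (given by positions and kept directions). -/
def applySeq {ι : Type} : DTree ι → List (List Bool × Bool) → DTree ι
  | T, [] => T
  | T, (q, b) :: rest => applySeq (T.raiseAt q b) rest

/-- Each raising operation of the sequence is applied at an inner node. -/
def ValidSeq {ι : Type} : DTree ι → List (List Bool × Bool) → Prop
  | _, [] => True
  | T, (q, b) :: rest => T.IsInnerPos q ∧ ValidSeq (T.raiseAt q b) rest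

/-- The total number of inner nodes pruned by a sequence of raising operations. -/
def seqPruned {ι : Type} : DTree ι → List (List Bool × Bool) → ℕ
  | _, [] => 0
  | T, (q, b) :: rest =>
      (match T.subtreeAt q with
        | some (.node _ _ l r) => 1 + DTree.innerCount (if b then l else r)
        | _ => 0) + seqPruned (T.raiseAt q b) rest

/-- `T'` is obtained from `T` by a (possibly empty) sequence of subtree raising
operations. -/
def RaisedFrom {ι : Type} (T T' : DTree ι) : Prop :=
  ∃ steps, ValidSeq T steps ∧ applySeq T steps = T'

/-- `T'` is obtained from `T` by a sequence of subtree raising operations pruning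
exactly `m` inner nodes in total. -/
def RaisedFromPruning {ι : Type} (T : DTree ι) (m : ℕ) (T' : DTree ι) : Prop :=
  ∃ steps, ValidSeq T steps ∧ seqPruned T steps = m ∧ applySeq T steps = T'

/-- Tracking the position of a node through one raising operation: nodes strictly
below the raised node on the discarded side, and the raised node itself, are pruned
(`none`); all other nodes survive at a possibly shifted position. -/
def stepMap (q : List Bool) (b : Bool) (p : List Bool) : Option (List Bool) :=
  if q <+: p then
    if q ++ [b] <+: p then some (q ++ p.drop (q.length + 1)) else none
  else some p

/-- Tracking the position of a node through a sequence of raising operations. -/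
def seqMap : List (List Bool × Bool) → List Bool → Option (List Bool)
  | [], p => some p
  | (q, b) :: rest, p => (stepMap q b p).bind (seqMap rest)

/-- The number of errors of `T` on a multiset of labeled examples. -/
noncomputable def errCountM {ι : Type} (T : DTree ι) (E : Multiset ((ι → ℝ) × Label)) : ℕ :=
  (E.filter fun q => T.classify q.1 ≠ q.2).card

/-- The 0/1 indicator vector of a set of coordinates. -/
def indVec {m : ℕ} (S : Finset (Fin m)) : Fin m → ℝ := fun i => if i ∈ S then 1 else 0

/-- The blue edge example of an edge `{v, w}`: value `1` exactly in the
coordinates `v` and `w`. -/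
def edgeEx (n : ℕ) : Sym2 (Fin n) → (Fin (n + 1) → ℝ) :=
  Sym2.lift ⟨fun v w => indVec {v.castSucc, w.castSucc},
    fun v w => by simp only []; rw [Finset.pair_comm]⟩

/-- The blue vertex example of a vertex `v`: value `1` exactly in the coordinates
`v` and `d*` (the last coordinate). -/
def vertEx (n : ℕ) (v : Fin n) : Fin (n + 1) → ℝ := indVec {v.castSucc, Fin.last n}

/-- The blue example with value `1` only in the coordinate `d*`. -/
def starEx (n : ℕ) : Fin (n + 1) → ℝ := indVec {Fin.last n}

/-- The labeling: the all-zero example is red, all other examples are blue. -/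
noncomputable def labG (n : ℕ) : (Fin (n + 1) → ℝ) → Label :=
  fun e => if e = (fun _ => 0) then Label.red else Label.blue

/-- The training set `E(G)` of the independent-set construction. -/
noncomputable def EG {n : ℕ} (G : SimpleGraph (Fin n)) [DecidableRel G.Adj] :
    Finset (Fin (n + 1) → ℝ) :=
  (G.edgeFinset.image (edgeEx n)) ∪ (Finset.univ.image (vertEx n)) ∪
    {starEx n, fun _ => 0}

/-- A descending path of cuts `f ≤ 0` (for `f` in the given list) whose right
children are blue leaves and whose left children continue the path, ending in the
given tree. -/
def chainB {m : ℕ} (fs : List (Fin m)) (tail : DTree (Fin m)) : DTree (Fin m) :=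
  fs.foldr (fun f acc => DTree.node f 0 acc (.leaf .blue)) tail

/-- The decision tree `T(G)`: the path of cuts `v₁ ≤ 0, …, vₙ ≤ 0, d* ≤ 0`; at each
vertex cut the right child is a blue leaf; the final cut has a red left child and a
blue right child. -/
def TG (n : ℕ) : DTree (Fin (n + 1)) :=
  chainB (List.ofFn fun i : Fin n => i.castSucc)
    (DTree.node (Fin.last n) 0 (.leaf .red) (.leaf .blue))

/-- The tree obtained from `T(G)` by applying, at each cut `v ≤ 0` with `v ∈ R`,
the raising operation keeping the child that continues the path: the path of the
cuts `v ≤ 0` for `v ∉ R` followed by the cut `d* ≤ 0`. -/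
def TGkeep (n : ℕ) (R : Finset (Fin n)) : DTree (Fin (n + 1)) :=
  chainB (((List.ofFn fun i : Fin n => i).filter fun v => decide (v ∉ R)).map Fin.castSucc)
    (DTree.node (Fin.last n) 0 (.leaf .red) (.leaf .blue))

/-!
`T(G)` is a path of cuts, one for each feature, whose right children are blue leaves and whose last
left child is a red leaf.  Raising operations on such a path delete cuts and possibly relabel the
final leaf.  The all-zero example follows the path to its end, so zero errors force that leaf to be
red; then an indicator vector is classified blue iff its support contains a remaining feature.
Hence the tree has zero errors iff the remaining features form a hitting set of the supports of the
blue examples, which are `{v, w}` for the edges, `{v, d*}` for the vertices, and `{d*}`.  This means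
that the cut `d*` remains and that the remaining vertices form a vertex cover, i.e. that the deleted
vertices form an independent set.
-/

namespace DTree

variable {ι : Type}

/-- `T'` arises from `T` by a single subtree raising operation at an inner node; `RaisedFrom` is the
reflexive transitive closure of this relation. -/
def RaiseStep (T T' : DTree ι) : Prop :=
  ∃ q b, T.IsInnerPos q ∧ T.raiseAt q b = T'

lemma not_isInnerPos_leaf (c : Label) (q : List Bool) : ¬ (leaf c : DTree ι).IsInnerPos q := by
  rintro ⟨f, t, l, r, h⟩
  cases q <;> simp [subtreeAt] at h

lemma raiseAt_nil (f : ι) (t : ℝ) (l r : DTree ι) (b : Bool) :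
    (node f t l r).raiseAt [] b = if b then r else l := by
  simp [raiseAt, subtreeAt, replaceAt]

lemma raiseAt_false_cons (f : ι) (t : ℝ) (l r : DTree ι) (p : List Bool) (b : Bool) :
    (node f t l r).raiseAt (false :: p) b = node f t (l.raiseAt p b) r := by
  unfold raiseAt
  rcases h : l.subtreeAt p with _ | (_ | _) <;> simp [subtreeAt, replaceAt, h]

lemma raiseAt_true_cons (f : ι) (t : ℝ) (l r : DTree ι) (p : List Bool) (b : Bool) :
    (node f t l r).raiseAt (true :: p) b = node f t l (r.raiseAt p b) := by
  unfold raiseAt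
  rcases h : r.subtreeAt p with _ | (_ | _) <;> simp [subtreeAt, replaceAt, h]

lemma not_raiseStep_leaf (c : Label) (T' : DTree ι) : ¬ RaiseStep (leaf c) T' :=
  fun ⟨q, _, hq, _⟩ => not_isInnerPos_leaf c q hq

lemma raiseStep_node_iff {f : ι} {t : ℝ} {l r T' : DTree ι} :
    RaiseStep (node f t l r) T' ↔ T' = l ∨ T' = r ∨
      (∃ l', RaiseStep l l' ∧ T' = node f t l' r) ∨
      (∃ r', RaiseStep r r' ∧ T' = node f t l r') := by
  constructor
  · rintro ⟨_ | ⟨_ | _, p⟩, b, hq, rfl⟩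
    · cases b <;> simp [raiseAt_nil]
    · exact .inr (.inr (.inl ⟨_, ⟨p, b, hq, rfl⟩, raiseAt_false_cons ..⟩))
    · exact .inr (.inr (.inr ⟨_, ⟨p, b, hq, rfl⟩, raiseAt_true_cons ..⟩))
  · rintro (rfl | rfl | ⟨_, ⟨p, b, hp, rfl⟩, rfl⟩ | ⟨_, ⟨p, b, hp, rfl⟩, rfl⟩)
    · exact ⟨[], false, ⟨_, _, _, _, rfl⟩, raiseAt_nil ..⟩
    · exact ⟨[], true, ⟨_, _, _, _, rfl⟩, raiseAt_nil ..⟩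
    · exact ⟨false :: p, b, hp, raiseAt_false_cons ..⟩
    · exact ⟨true :: p, b, hp, raiseAt_true_cons ..⟩

lemma innerCount_replaceAt_add {T U : DTree ι} {q : List Bool} (h : T.subtreeAt q = some U)
    (V : DTree ι) :
    (T.replaceAt q V).innerCount + U.innerCount = T.innerCount + V.innerCount := by
  induction q generalizing T with
  | nil =>
    cases T <;> obtain rfl := Option.some.inj h <;> exact add_comm _ _
  | cons d p ih =>
    cases T with
    | leaf c => cases h
    | node f t l r =>
      have := ih h
      cases d <;> simp only [replaceAt, innerCount, Bool.false_eq_true, if_false, if_true] at this ⊢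
        <;> omega

lemma innerCount_raiseAt_add {T l r : DTree ι} {q : List Bool} {f : ι} {t : ℝ}
    (h : T.subtreeAt q = some (node f t l r)) (b : Bool) :
    (T.raiseAt q b).innerCount + (1 + (if b then l else r).innerCount) = T.innerCount := by
  have hreplace := innerCount_replaceAt_add h (if b then r else l)
  have hraise : T.raiseAt q b = T.replaceAt q (if b then r else l) := by simp [raiseAt, h]
  cases b <;> simp only [hraise, innerCount, Bool.false_eq_true, if_false, if_true] at hreplace ⊢
    <;> omega

end DTree

open DTree

section RaisingSequences

variable {ι : Type}

lemma raisedFrom_iff_reflTransGen {T T' : DTree ι} :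
    RaisedFrom T T' ↔ Relation.ReflTransGen RaiseStep T T' := by
  constructor
  · rintro ⟨steps, hv, rfl⟩
    induction steps generalizing T with
    | nil => exact .refl
    | cons s rest ih => exact .head ⟨s.1, s.2, hv.1, rfl⟩ (ih hv.2)
  · intro h
    induction h using Relation.ReflTransGen.head_induction_on with
    | refl => exact ⟨[], trivial, rfl⟩
    | head hstep _ ih =>
      obtain ⟨q, b, hq, rfl⟩ := hstep
      obtain ⟨steps, hv, ha⟩ := ih
      exact ⟨(q, b) :: steps, ⟨hq, hv⟩, ha⟩

lemma raisedFrom_leaf_iff {c : Label} {T' : DTree ι} :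
    RaisedFrom (leaf c) T' ↔ T' = leaf c := by
  rw [raisedFrom_iff_reflTransGen]
  exact Relation.reflTransGen_iff_eq (not_raiseStep_leaf c)

lemma raisedFrom_node_iff {f : ι} {t : ℝ} {l r T' : DTree ι} :
    RaisedFrom (node f t l r) T' ↔ RaisedFrom l T' ∨ RaisedFrom r T' ∨
      ∃ l' r', RaisedFrom l l' ∧ RaisedFrom r r' ∧ T' = node f t l' r' := by
  simp only [raisedFrom_iff_reflTransGen]
  constructor
  · intro h
    induction h with
    | refl => exact .inr (.inr ⟨l, r, .refl, .refl, rfl⟩)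
    | tail _ hstep ih =>
      obtain hl | hr | ⟨l', r', hl, hr, rfl⟩ := ih
      · exact .inl (hl.tail hstep)
      · exact .inr (.inl (hr.tail hstep))
      · obtain rfl | rfl | ⟨l'', hl', rfl⟩ | ⟨r'', hr', rfl⟩ := raiseStep_node_iff.1 hstep
        · exact .inl hl
        · exact .inr (.inl hr)
        · exact .inr (.inr ⟨l'', r', hl.tail hl', hr, rfl⟩)
        · exact .inr (.inr ⟨l', r'', hl, hr.tail hr', rfl⟩)
  · rintro (hl | hr | ⟨l', r', hl, hr, rfl⟩)
    · exact .head (raiseStep_node_iff.2 (.inl rfl)) hl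
    · exact .head (raiseStep_node_iff.2 (.inr (.inl rfl))) hr
    · have raise_left : Relation.ReflTransGen RaiseStep (node f t l r) (node f t l' r) :=
        hl.lift (node f t · r) fun _ _ h => raiseStep_node_iff.2 (.inr (.inr (.inl ⟨_, h, rfl⟩)))
      have raise_right : Relation.ReflTransGen RaiseStep (node f t l' r) (node f t l' r') :=
        hr.lift (node f t l' ·) fun _ _ h => raiseStep_node_iff.2 (.inr (.inr (.inr ⟨_, h, rfl⟩)))
      exact raise_left.trans raise_right

lemma innerCount_applySeq_add_seqPruned {T : DTree ι} {steps : List (List Bool × Bool)}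
    (h : ValidSeq T steps) :
    (applySeq T steps).innerCount + seqPruned T steps = T.innerCount := by
  induction steps generalizing T with
  | nil => rfl
  | cons s rest ih =>
    obtain ⟨q, b⟩ := s
    obtain ⟨⟨f, t, l, r, hq⟩, hrest⟩ := h
    have hpruned : seqPruned T ((q, b) :: rest) =
        1 + (if b then l else r).innerCount + seqPruned (T.raiseAt q b) rest := by
      simp only [seqPruned, hq]
    rw [applySeq, hpruned, ← innerCount_raiseAt_add hq b, ← ih hrest]
    omega

lemma raisedFromPruning_iff {T T' : DTree ι} {m : ℕ} :
    RaisedFromPruning T m T' ↔ RaisedFrom T T' ∧ T'.innerCount + m = T.innerCount := by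
  constructor
  · rintro ⟨steps, hv, rfl, rfl⟩
    exact ⟨⟨steps, hv, rfl⟩, innerCount_applySeq_add_seqPruned hv⟩
  · rintro ⟨⟨steps, hv, rfl⟩, hm⟩
    have hpruned := innerCount_applySeq_add_seqPruned hv
    exact ⟨steps, hv, by omega, rfl⟩

end RaisingSequences

section Chains

variable {m : ℕ}

lemma chainB_cons (f : Fin m) (fs : List (Fin m)) (tail : DTree (Fin m)) :
    chainB (f :: fs) tail = node f 0 (chainB fs tail) (leaf .blue) :=
  rfl

lemma chainB_append (fs gs : List (Fin m)) (tail : DTree (Fin m)) :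
    chainB (fs ++ gs) tail = chainB fs (chainB gs tail) :=
  List.foldr_append

lemma innerCount_chainB (fs : List (Fin m)) (tail : DTree (Fin m)) :
    (chainB fs tail).innerCount = fs.length + tail.innerCount := by
  induction fs with
  | nil => simp [chainB]
  | cons f fs ih => simp only [chainB_cons, innerCount, ih, List.length_cons]; omega

lemma raisedFrom_chainB_of_sublist {fs' fs : List (Fin m)} (h : fs'.Sublist fs)
    (tail : DTree (Fin m)) : RaisedFrom (chainB fs tail) (chainB fs' tail) := by
  induction h with
  | slnil => exact ⟨[], trivial, rfl⟩
  | cons f _ ih => exact raisedFrom_node_iff.2 (.inl ih)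
  | cons_cons f _ ih =>
    exact raisedFrom_node_iff.2 (.inr (.inr ⟨_, _, ih, raisedFrom_leaf_iff.2 rfl, rfl⟩))

lemma exists_sublist_of_raisedFrom_chainB_leaf {fs : List (Fin m)} {c : Label}
    {T' : DTree (Fin m)} (h : RaisedFrom (chainB fs (leaf c)) T') :
    ∃ fs' c', fs'.Sublist fs ∧ T' = chainB fs' (leaf c') := by
  induction fs generalizing T' with
  | nil => exact ⟨[], c, .slnil, raisedFrom_leaf_iff.1 h⟩
  | cons f fs ih =>
    obtain hleft | hright | ⟨l', r', hl, hr, rfl⟩ := raisedFrom_node_iff.1 h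
    · obtain ⟨fs', c', hsub, rfl⟩ := ih hleft
      exact ⟨fs', c', hsub.cons f, rfl⟩
    · exact ⟨[], .blue, List.nil_sublist _, raisedFrom_leaf_iff.1 hright⟩
    · obtain ⟨fs', c', hsub, rfl⟩ := ih hl
      obtain rfl := raisedFrom_leaf_iff.1 hr
      exact ⟨f :: fs', c', hsub.cons_cons f, rfl⟩

lemma indVec_le_zero_iff {S : Finset (Fin m)} {f : Fin m} : indVec S f ≤ 0 ↔ f ∉ S := by
  by_cases h : f ∈ S <;> simp [indVec, h]

lemma classify_chainB_indVec (fs : List (Fin m)) (tail : DTree (Fin m)) (S : Finset (Fin m)) :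
    (chainB fs tail).classify (indVec S) =
      if ∃ f ∈ fs, f ∈ S then .blue else tail.classify (indVec S) := by
  induction fs with
  | nil => simp [chainB]
  | cons f fs ih =>
    by_cases hf : f ∈ S <;> simp [chainB_cons, classify, indVec_le_zero_iff, hf, ih]

end Chains

section TrainingSet

variable {n : ℕ}

lemma errCount_eq_zero_iff {ι : Type} {T : DTree ι} {E : Finset (ι → ℝ)}
    {lab : (ι → ℝ) → Label} : errCount T E lab = 0 ↔ ∀ e ∈ E, T.classify e = lab e := by
  simp [errCount, Finset.filter_eq_empty_iff]

lemma indVec_empty (m : ℕ) : indVec (∅ : Finset (Fin m)) = fun _ => 0 :=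
  funext fun i => if_neg (Finset.notMem_empty i)

lemma labG_indVec (S : Finset (Fin (n + 1))) :
    labG n (indVec S) = if S = ∅ then .red else .blue := by
  have h : indVec S = (fun _ => 0) ↔ S = ∅ := by
    simp [indVec, funext_iff, Finset.eq_empty_iff_forall_notMem]
  simp only [labG, h]

lemma forall_mem_EG_iff (G : SimpleGraph (Fin n)) [DecidableRel G.Adj]
    {P : (Fin (n + 1) → ℝ) → Prop} :
    (∀ e ∈ EG G, P e) ↔ (∀ v w, G.Adj v w → P (indVec {v.castSucc, w.castSucc})) ∧
      (∀ v : Fin n, P (indVec {v.castSucc, Fin.last n})) ∧ P (indVec {Fin.last n}) ∧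
      P (indVec ∅) := by
  have edge_examples : (∀ s ∈ G.edgeSet, P (edgeEx n s)) ↔
      ∀ v w, G.Adj v w → P (indVec {v.castSucc, w.castSucc}) :=
    Sym2.forall
  simp only [EG, Finset.forall_mem_union, Finset.forall_mem_image, SimpleGraph.mem_edgeFinset,
    Finset.mem_insert, Finset.mem_singleton, forall_eq_or_imp, forall_eq, edge_examples,
    Finset.mem_univ, true_imp_iff, indVec_empty, and_assoc]
  rfl

lemma classify_chainB_red_eq_labG_iff {fs : List (Fin (n + 1))} {S : Finset (Fin (n + 1))} :
    (chainB fs (leaf .red)).classify (indVec S) = labG n (indVec S) ↔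
      (S.Nonempty → ∃ f ∈ fs, f ∈ S) := by
  rw [classify_chainB_indVec, labG_indVec]
  obtain rfl | hS := S.eq_empty_or_nonempty
  · simp [classify]
  · simp [classify, hS, hS.ne_empty]

lemma errCount_chainB_leaf_eq_zero_iff (G : SimpleGraph (Fin n)) [DecidableRel G.Adj]
    (fs : List (Fin (n + 1))) (c : Label) :
    errCount (chainB fs (leaf c)) (EG G) (labG n) = 0 ↔
      c = .red ∧ Fin.last n ∈ fs ∧ G.IsVertexCover {v | v.castSucc ∈ fs} := by
  have hits_pair (a b : Fin (n + 1)) :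
      (∃ f ∈ fs, f ∈ ({a, b} : Finset (Fin (n + 1)))) ↔ a ∈ fs ∨ b ∈ fs := by
    simp [and_or_left, exists_or]
  have hits_singleton (a : Fin (n + 1)) :
      (∃ f ∈ fs, f ∈ ({a} : Finset (Fin (n + 1)))) ↔ a ∈ fs := by
    simp
  rw [errCount_eq_zero_iff, forall_mem_EG_iff]
  cases c with
  | blue => simp [classify_chainB_indVec, labG_indVec, classify]
  | red =>
    simp only [classify_chainB_red_eq_labG_iff, Finset.insert_nonempty, Finset.singleton_nonempty,
      Finset.not_nonempty_empty, hits_pair, hits_singleton, true_imp_iff, false_imp_iff, and_true,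
      true_and]
    exact ⟨fun ⟨hedge, _, hstar⟩ => ⟨hstar, fun v w => hedge v w⟩,
      fun ⟨hstar, hcover⟩ => ⟨fun _ _ hadj => hcover hadj, fun _ => .inr hstar, hstar⟩⟩

end TrainingSet

section KeptFeatures

variable {n : ℕ}

/-- The features of the cuts of `TGkeep n S`, from the root downwards: the vertices outside `S`,
followed by `d*`. -/
def keptFeatures (S : Finset (Fin n)) : List (Fin (n + 1)) :=
  (List.finRange (n + 1)).filter (· ∉ S.map Fin.castSuccEmb)

lemma last_mem_keptFeatures (S : Finset (Fin n)) : Fin.last n ∈ keptFeatures S := by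
  simp [keptFeatures, Fin.castSucc_ne_last]

lemma castSucc_mem_keptFeatures_iff {S : Finset (Fin n)} {v : Fin n} :
    v.castSucc ∈ keptFeatures S ↔ v ∉ S := by
  simp [keptFeatures]

lemma sortedLT_keptFeatures (S : Finset (Fin n)) : (keptFeatures S).SortedLT :=
  ((List.pairwise_lt_finRange _).filter _).sortedLT

lemma length_keptFeatures_add_card (S : Finset (Fin n)) :
    (keptFeatures S).length + S.card = n + 1 := by
  have htoFinset : (keptFeatures S).toFinset = (S.map Fin.castSuccEmb)ᶜ := by
    ext; simp [keptFeatures]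
  rw [← List.toFinset_card_of_nodup (sortedLT_keptFeatures S).nodup, htoFinset,
    ← Finset.card_map (s := S) Fin.castSuccEmb, Finset.card_compl_add_card, Fintype.card_fin]

lemma exists_eq_keptFeatures {fs : List (Fin (n + 1))} (hsub : fs.Sublist (List.finRange (n + 1)))
    (hlast : Fin.last n ∈ fs) : ∃ S : Finset (Fin n), fs = keptFeatures S := by
  refine ⟨Finset.univ.filter fun v => v.castSucc ∉ fs, List.SortedLT.eq_of_mem_iff
    ((List.pairwise_lt_finRange _).sublist hsub).sortedLT (sortedLT_keptFeatures _) fun f => ?_⟩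
  cases f using Fin.lastCases with
  | last => simp only [hlast, last_mem_keptFeatures]
  | cast v => simp [castSucc_mem_keptFeatures_iff]

lemma TG_eq_chainB_leaf (n : ℕ) : TG n = chainB (List.finRange (n + 1)) (leaf .red) := by
  rw [List.finRange_succ_last, chainB_append, ← List.ofFn_eq_map]
  rfl

lemma TGkeep_eq_chainB_leaf (S : Finset (Fin n)) :
    TGkeep n S = chainB (keptFeatures S) (leaf .red) := by
  have hsplit : keptFeatures S =
      ((List.ofFn fun i : Fin n => i).filter fun v => decide (v ∉ S)).map Fin.castSucc ++
        [Fin.last n] := by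
    simp [keptFeatures, List.finRange_succ_last, List.filter_map, List.ofFn_eq_map,
      Function.comp_def, Fin.castSucc_ne_last]
  rw [hsplit, chainB_append]
  rfl

end KeptFeatures

section Reduction

variable {n : ℕ}

lemma isIndepSet_iff_forall_not_adj {V : Type*} {G : SimpleGraph V} {S : Finset V} :
    G.IsIndepSet S ↔ ∀ v ∈ S, ∀ w ∈ S, ¬ G.Adj v w :=
  ⟨fun h _ hv _ hw hadj => h hv hw hadj.ne hadj, fun h _ hv _ hw _ => h _ hv _ hw⟩

lemma innerCount_TGkeep_add_card (S : Finset (Fin n)) :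
    (TGkeep n S).innerCount + S.card = (TG n).innerCount := by
  have hlength := length_keptFeatures_add_card S
  simpa [TGkeep_eq_chainB_leaf, TG_eq_chainB_leaf, innerCount_chainB, innerCount] using hlength

lemma errCount_TGkeep_eq_zero_iff (G : SimpleGraph (Fin n)) [DecidableRel G.Adj]
    (S : Finset (Fin n)) :
    errCount (TGkeep n S) (EG G) (labG n) = 0 ↔ G.IsIndepSet S := by
  have hkept : {v : Fin n | v.castSucc ∈ keptFeatures S} = (S : Set (Fin n))ᶜ := by
    ext; simp [castSucc_mem_keptFeatures_iff]
  simp [TGkeep_eq_chainB_leaf, errCount_chainB_leaf_eq_zero_iff, last_mem_keptFeatures, hkept]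

lemma raisedFrom_TGkeep (S : Finset (Fin n)) : RaisedFrom (TG n) (TGkeep n S) := by
  rw [TG_eq_chainB_leaf, TGkeep_eq_chainB_leaf]
  exact raisedFrom_chainB_of_sublist List.filter_sublist _

lemma exists_eq_TGkeep_of_errCount_eq_zero (G : SimpleGraph (Fin n)) [DecidableRel G.Adj]
    {T' : DTree (Fin (n + 1))} (hraised : RaisedFrom (TG n) T')
    (herr : errCount T' (EG G) (labG n) = 0) : ∃ S, T' = TGkeep n S := by
  rw [TG_eq_chainB_leaf] at hraised
  obtain ⟨fs, c, hsub, rfl⟩ := exists_sublist_of_raisedFrom_chainB_leaf hraised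
  obtain ⟨rfl, hlast, -⟩ := (errCount_chainB_leaf_eq_zero_iff G fs c).1 herr
  obtain ⟨S, rfl⟩ := exists_eq_keptFeatures hsub hlast
  exact ⟨S, (TGkeep_eq_chainB_leaf S).symm⟩

theorem raisedFromPruning_TG_and_errCount_eq_zero_iff (G : SimpleGraph (Fin n))
    [DecidableRel G.Adj] {m : ℕ} {T' : DTree (Fin (n + 1))} :
    RaisedFromPruning (TG n) m T' ∧ errCount T' (EG G) (labG n) = 0 ↔
      ∃ S : Finset (Fin n), S.card = m ∧ G.IsIndepSet S ∧ T' = TGkeep n S := by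
  rw [raisedFromPruning_iff]
  constructor
  · rintro ⟨⟨hraised, hm⟩, herr⟩
    obtain ⟨S, rfl⟩ := exists_eq_TGkeep_of_errCount_eq_zero G hraised herr
    have hcount := innerCount_TGkeep_add_card S
    exact ⟨S, by omega, (errCount_TGkeep_eq_zero_iff G S).1 herr, rfl⟩
  · rintro ⟨S, rfl, hS, rfl⟩
    exact ⟨⟨raisedFrom_TGkeep S, innerCount_TGkeep_add_card S⟩,
      (errCount_TGkeep_eq_zero_iff G S).2 hS⟩

end Reduction

/-- For a graph `G` on `n` vertices and `0 ≤ k ≤ n`: the tree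
`T(G)` can be transformed by raising operations pruning exactly `k` inner nodes
into a tree with zero errors on `E(G)` iff `G` has an independent set of size `k`;
the same holds with "at least `k`" in place of "exactly `k`". Moreover, for every
`S ⊆ V(G)`, the tree obtained by raising away exactly the cuts of the vertices
of `S` (keeping the continuing child each time) has zero errors on `E(G)` iff `S`
is an independent set. -/
theorem stmt8 {n : ℕ} (G : SimpleGraph (Fin n)) [DecidableRel G.Adj]
    (k : ℕ) (hk : k ≤ n) :
    ((∃ T', RaisedFromPruning (TG n) k T' ∧ errCount T' (EG G) (labG n) = 0)
      ↔ ∃ S : Finset (Fin n), S.card = k ∧ ∀ v ∈ S, ∀ w ∈ S, ¬ G.Adj v w)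
    ∧ ((∃ T' m, k ≤ m ∧ RaisedFromPruning (TG n) m T' ∧
          errCount T' (EG G) (labG n) = 0)
      ↔ ∃ S : Finset (Fin n), S.card = k ∧ ∀ v ∈ S, ∀ w ∈ S, ¬ G.Adj v w)
    ∧ (∀ S : Finset (Fin n),
        errCount (TGkeep n S) (EG G) (labG n) = 0 ↔
          ∀ v ∈ S, ∀ w ∈ S, ¬ G.Adj v w) := by
  simp only [← isIndepSet_iff_forall_not_adj]
  have exact_iff (m : ℕ) :
      (∃ T', RaisedFromPruning (TG n) m T' ∧ errCount T' (EG G) (labG n) = 0) ↔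
        ∃ S : Finset (Fin n), S.card = m ∧ G.IsIndepSet S := by
    simp only [raisedFromPruning_TG_and_errCount_eq_zero_iff]
    exact ⟨fun ⟨_, S, hcard, hS, _⟩ => ⟨S, hcard, hS⟩,
      fun ⟨S, hcard, hS⟩ => ⟨_, S, hcard, hS, rfl⟩⟩
  refine ⟨exact_iff k, ⟨?_, ?_⟩, errCount_TGkeep_eq_zero_iff G⟩
  · rintro ⟨T', m, hkm, hT'⟩
    obtain ⟨S, rfl, hS⟩ := (exact_iff m).1 ⟨T', hT'⟩
    obtain ⟨S', hsub, hcard⟩ := Finset.exists_subset_card_eq hkm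
    exact ⟨S', hcard, Set.Pairwise.mono (Finset.coe_subset.2 hsub) hS⟩
  · intro h
    obtain ⟨T', hT'⟩ := (exact_iff k).2 h
    exact ⟨T', k, le_rfl, hT'⟩
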